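/- For every n ≥ 1, let p : [0,1]^{T_n} × [0,+∞]^{Q_n} → [0,1]^{T_n} be the projection onto the first factor. Then p ∘ δ_n = α_n, p maps the permutohedron Perm_n onto the associahedron Assoc_n, and for every x ∈ Assoc_n the preimage p^{-1}(x) ∩ Perm_n is contractible. (Theorem 8.4 of the paper for the projection π''_n : Perm_n → Assoc_n.) -/

import Mathlib

open scoped ENNReal

/-- The open configuration space `Δ^n = {0 < t 1 < … < t n < 1}` of `n` points in `(0,1)`. -/
def openSimplex (n : ℕ) : Set (Fin n → ℝ) :=
  {t | (∀ i j : Fin n, i < j → t i < t j) ∧ (∀ i, 0 < t i) ∧ ∀ i, t i < 1}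

/-- Extension of a configuration `t : Fin n → ℝ` by the boundary conventions
`t 0 = 0` and `t (n+1) = 1`, giving a function on `Fin (n+2)`. -/
def ext01 {n : ℕ} (t : Fin n → ℝ) : Fin (n + 2) → ℝ :=
  Fin.cons 0 (Fin.snoc t 1)

/-- Extension of a configuration `t : Fin n → ℝ` by the convention `t 0 = 0` only,
giving a function on `Fin (n+1)`. -/
def ext0 {n : ℕ} (t : Fin n → ℝ) : Fin (n + 1) → ℝ :=
  Fin.cons 0 t

/-- The index set `T_n` of triples `0 ≤ i < j < k ≤ n+1`. -/
abbrev TriIdx (n : ℕ) : Type :=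
  {p : Fin (n + 2) × Fin (n + 2) × Fin (n + 2) // p.1 < p.2.1 ∧ p.2.1 < p.2.2}

/-- The map `α_n : Δ^n → [0,1]^{T_n}`, `s_{ijk} = (t_j − t_i)/(t_k − t_i)`
(with `t_0 = 0`, `t_{n+1} = 1`), whose image's closure is the associahedron. -/
noncomputable def alphaMap (n : ℕ) (t : Fin n → ℝ) : TriIdx n → ℝ := fun q =>
  (ext01 t q.1.2.1 - ext01 t q.1.1) / (ext01 t q.1.2.2 - ext01 t q.1.1)

/-- The `n`-dimensional associahedron: the closure of `α_n(Δ^n)`. -/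
noncomputable def Assoc (n : ℕ) : Set (TriIdx n → ℝ) :=
  closure (alphaMap n '' openSimplex n)

open scoped ENNReal

/-- The index set `Q_n` of quadruples `0 ≤ i < j < k < ℓ ≤ n+1`. -/
abbrev QuadIdx (n : ℕ) : Type :=
  {p : Fin (n + 2) × Fin (n + 2) × Fin (n + 2) × Fin (n + 2) //
    p.1 < p.2.1 ∧ p.2.1 < p.2.2.1 ∧ p.2.2.1 < p.2.2.2}

/-- The map `δ_n : Δ^n → [0,1]^{T_n} × [0,+∞]^{Q_n}` with components
`α_n` and `r_{ijkℓ}(t) = (t_j − t_i)/(t_ℓ − t_k)` (conventions `t_0 = 0`,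
`t_{n+1} = 1`). -/
noncomputable def deltaMap (n : ℕ) (t : Fin n → ℝ) :
    (TriIdx n → ℝ) × (QuadIdx n → ℝ≥0∞) :=
  (alphaMap n t,
   fun q => ENNReal.ofReal (ext01 t q.1.2.1 - ext01 t q.1.1) /
     ENNReal.ofReal (ext01 t q.1.2.2.2 - ext01 t q.1.2.2.1))

/-- The `n`-dimensional permutohedron: the (leveled) compactification of `Δ^n` obtained
as the closure of `δ_n(Δ^n)`. -/
noncomputable def Perm (n : ℕ) : Set ((TriIdx n → ℝ) × (QuadIdx n → ℝ≥0∞)) :=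
  closure (deltaMap n '' openSimplex n)

section RatioSpace

variable {ι : Type*}

/-- The matrix of ratios of a family of scales. -/
noncomputable def ratioMatrix (b : ι → ℝ≥0∞) : ι → ι → ℝ≥0∞ := fun i j => b i / b j

variable (ι) in
/-- The matrices of ratios of families of positive finite scales. -/
def finiteRatios : Set (ι → ι → ℝ≥0∞) :=
  {ρ | ∃ b : ι → ℝ≥0∞, (∀ i, b i ≠ 0 ∧ b i ≠ ∞) ∧ ratioMatrix b = ρ}

variable (ι) in
/-- The compactification of the space of scales up to a common factor by all ratios. -/
def ratioSpace : Set (ι → ι → ℝ≥0∞) := closure (finiteRatios ι)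

lemma ENNReal.div_mul_div_cancel_middle {a b c : ℝ≥0∞} (hb : b ≠ 0) (hb' : b ≠ ∞) :
    a / b * (b / c) = a / c := by
  rw [div_eq_mul_inv, div_eq_mul_inv, mul_assoc, ← mul_assoc b⁻¹, ENNReal.inv_mul_cancel hb hb',
    one_mul, ← div_eq_mul_inv]

lemma ratioSpace_inv {ρ : ι → ι → ℝ≥0∞} (hρ : ρ ∈ ratioSpace ι) (i j : ι) :
    (ρ i j)⁻¹ = ρ j i := by
  have hcl : IsClosed {ρ : ι → ι → ℝ≥0∞ | (ρ i j)⁻¹ = ρ j i} :=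
    isClosed_eq (by fun_prop) (by fun_prop)
  refine closure_minimal ?_ hcl hρ
  rintro _ ⟨b, hb, rfl⟩
  exact ENNReal.inv_div (Or.inl (hb j).2) (Or.inl (hb j).1)

lemma ratioSpace_self {ρ : ι → ι → ℝ≥0∞} (hρ : ρ ∈ ratioSpace ι) (i : ι) : ρ i i = 1 := by
  have hcl : IsClosed {ρ : ι → ι → ℝ≥0∞ | ρ i i = 1} :=
    isClosed_eq (by fun_prop) (by fun_prop)
  refine closure_minimal ?_ hcl hρ
  rintro _ ⟨b, hb, rfl⟩
  exact ENNReal.div_self (hb i).1 (hb i).2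

lemma ratioSpace_mul {ρ : ι → ι → ℝ≥0∞} (hρ : ρ ∈ ratioSpace ι) (i j k : ι)
    (h₁ : ρ i j ≠ 0 ∨ ρ j k ≠ ∞) (h₂ : ρ j k ≠ 0 ∨ ρ i j ≠ ∞) :
    ρ i j * ρ j k = ρ i k := by
  have := mem_closure_iff_nhdsWithin_neBot.1 hρ
  have hid : Filter.Tendsto (fun σ : ι → ι → ℝ≥0∞ => σ) (nhdsWithin ρ (finiteRatios ι))
      (nhds ρ) := Filter.tendsto_id.mono_left nhdsWithin_le_nhds
  have hcoord : ∀ a c, Filter.Tendsto (fun σ : ι → ι → ℝ≥0∞ => σ a c)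
      (nhdsWithin ρ (finiteRatios ι)) (nhds (ρ a c)) := fun a c =>
    ((continuous_apply_apply a c).tendsto ρ).comp hid
  refine tendsto_nhds_unique ((ENNReal.Tendsto.mul (hcoord i j) h₁ (hcoord j k) h₂).congr' ?_)
    (hcoord i k)
  filter_upwards [self_mem_nhdsWithin]
  rintro _ ⟨b, hb, rfl⟩
  exact ENNReal.div_mul_div_cancel_middle (hb j).1 (hb j).2

lemma ratioSpace_le_one_or {ρ : ι → ι → ℝ≥0∞} (hρ : ρ ∈ ratioSpace ι) (i j : ι) :
    ρ i j ≤ 1 ∨ ρ j i ≤ 1 := by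
  rw [← ratioSpace_inv hρ i j, ENNReal.inv_le_one]
  exact le_total _ _

lemma ratioSpace_mono {ρ : ι → ι → ℝ≥0∞} (hρ : ρ ∈ ratioSpace ι) {i j : ι} (h : 1 ≤ ρ i j)
    (k : ι) : ρ j k ≤ ρ i k := by
  rcases eq_or_ne (ρ j k) 0 with h0 | h0
  · simp [h0]
  · rw [← ratioSpace_mul hρ i j k (Or.inl (zero_lt_one.trans_le h).ne') (Or.inl h0)]
    exact le_mul_of_one_le_left' h

lemma ratioSpace_anti {ρ : ι → ι → ℝ≥0∞} (hρ : ρ ∈ ratioSpace ι) {i j : ι} (h : 1 ≤ ρ i j)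
    (k : ι) : ρ k i ≤ ρ k j := by
  rw [← ratioSpace_inv hρ i k, ← ratioSpace_inv hρ j k, ENNReal.inv_le_inv]
  exact ratioSpace_mono hρ h k

end RatioSpace

section Gaps

variable {ι : Type*} [Fintype ι] [DecidableEq ι]

/-- The product of the weights of the cuts separating `i` (inside) from `j` (outside). -/
noncomputable def sepProd (m : Finset ι → ℝ≥0∞) (i j : ι) : ℝ≥0∞ :=
  ∏ A with i ∈ A ∧ j ∉ A, m A

/-- The matrix of ratios whose consecutive ratios are prescribed by the weights of the cuts. -/
noncomputable def gapRatio (m : Finset ι → ℝ≥0∞) : ι → ι → ℝ≥0∞ :=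
  fun i j => sepProd m i j / sepProd m j i

/-- Weights of cuts that are at least `1` and define a total preorder. -/
def IsGap (m : Finset ι → ℝ≥0∞) : Prop :=
  (∀ A, 1 ≤ m A) ∧ ∀ i j, (∀ A, i ∈ A → j ∉ A → m A = 1) ∨ ∀ A, j ∈ A → i ∉ A → m A = 1

lemma sepProd_eq_one {m : Finset ι → ℝ≥0∞} {i j : ι} (h : ∀ A, i ∈ A → j ∉ A → m A = 1) :
    sepProd m i j = 1 := by
  refine Finset.prod_eq_one fun A hA => ?_
  rw [Finset.mem_filter] at hA
  exact h A hA.2.1 hA.2.2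

lemma one_le_sepProd {m : Finset ι → ℝ≥0∞} (hm : ∀ A, 1 ≤ m A) (i j : ι) :
    1 ≤ sepProd m i j :=
  Finset.one_le_prod' fun A _ => hm A

lemma IsGap.sepProd_eq_one_or {m : Finset ι → ℝ≥0∞} (hm : IsGap m) (i j : ι) :
    sepProd m i j = 1 ∨ sepProd m j i = 1 :=
  (hm.2 i j).imp sepProd_eq_one sepProd_eq_one

lemma gapRatio_eq_one {m : Finset ι → ℝ≥0∞} {i j : ι} (h : ∀ A, i ∈ A → j ∉ A → m A = 1)
    (h' : ∀ A, j ∈ A → i ∉ A → m A = 1) : gapRatio m i j = 1 := by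
  simp [gapRatio, sepProd_eq_one h, sepProd_eq_one h']

lemma IsGap.gapRatio_eq_top {m : Finset ι → ℝ≥0∞} (hm : IsGap m) {i j : ι} {A : Finset ι}
    (hi : i ∈ A) (hj : j ∉ A) (hA : m A = ∞) : gapRatio m i j = ∞ := by
  have h₁ : sepProd m i j = ∞ := by
    rw [← top_le_iff, ← hA]
    exact Finset.single_le_prod' (f := m) (fun B _ => hm.1 B) (by simp [hi, hj])
  have h₂ : sepProd m j i = 1 := (hm.sepProd_eq_one_or i j).resolve_left (by simp [h₁])
  simp [gapRatio, h₁, h₂]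

lemma IsGap.inv_gapRatio {m : Finset ι → ℝ≥0∞} (hm : IsGap m) (i j : ι) :
    (gapRatio m i j)⁻¹ = gapRatio m j i := by
  refine ENNReal.inv_div ?_ (Or.inl (zero_lt_one.trans_le (one_le_sepProd hm.1 _ _)).ne')
  rcases hm.sepProd_eq_one_or i j with h | h <;> simp [h]

lemma tendsto_prod_of_one_le {X κ : Type*} {l : Filter X} (s : Finset κ) {f : X → κ → ℝ≥0∞}
    {a : κ → ℝ≥0∞} (ha : ∀ k, 1 ≤ a k)
    (hf : ∀ k, Filter.Tendsto (fun x => f x k) l (nhds (a k))) :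
    Filter.Tendsto (fun x => ∏ k ∈ s, f x k) l (nhds (∏ k ∈ s, a k)) := by
  classical
  induction s using Finset.induction_on with
  | empty => simpa using tendsto_const_nhds
  | insert k s hk ih =>
    simp only [Finset.prod_insert hk]
    have h₁ : a k ≠ 0 := (zero_lt_one.trans_le (ha k)).ne'
    have h₂ : ∏ k ∈ s, a k ≠ 0 :=
      (zero_lt_one.trans_le (Finset.one_le_prod' fun k _ => ha k)).ne'
    exact ENNReal.Tendsto.mul (hf k) (Or.inl h₁) ih (Or.inl h₂)

lemma IsGap.tendsto_gapRatio {m : Finset ι → ℝ≥0∞} (hm : IsGap m) {X : Type*} {l : Filter X}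
    {f : X → Finset ι → ℝ≥0∞} (hf : ∀ A, Filter.Tendsto (fun x => f x A) l (nhds (m A))) :
    Filter.Tendsto (fun x => gapRatio (f x)) l (nhds (gapRatio m)) := by
  rw [tendsto_pi_nhds]
  intro i
  rw [tendsto_pi_nhds]
  intro j
  refine ENNReal.Tendsto.div (tendsto_prod_of_one_le _ hm.1 hf)
    (Or.inl (zero_lt_one.trans_le (one_le_sepProd hm.1 i j)).ne')
    (tendsto_prod_of_one_le _ hm.1 hf) ?_
  rcases hm.sepProd_eq_one_or i j with h | h <;> simp [h]

lemma gapRatio_mem_finiteRatios {m : Finset ι → ℝ≥0∞} (hm : ∀ A, 1 ≤ m A ∧ m A ≠ ∞) :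
    gapRatio m ∈ finiteRatios ι := by
  have h0 : ∀ s : Finset (Finset ι), ∏ A ∈ s, m A ≠ 0 := fun s =>
    (zero_lt_one.trans_le (Finset.one_le_prod' fun A _ => (hm A).1)).ne'
  have htop : ∀ s : Finset (Finset ι), ∏ A ∈ s, m A ≠ ∞ := fun s =>
    ENNReal.prod_ne_top fun A _ => (hm A).2
  refine ⟨fun i => ∏ A with i ∈ A, m A, fun i => ⟨h0 _, htop _⟩, ?_⟩
  funext i j
  have hsplit : ∀ i j, ∏ A with i ∈ A, m A = (∏ A with i ∈ A ∧ j ∈ A, m A) * sepProd m i j := by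
    intro i j
    rw [← Finset.prod_filter_mul_prod_filter_not (Finset.univ.filter fun A => i ∈ A)
      (fun A => j ∈ A), Finset.filter_filter, Finset.filter_filter, sepProd]
  simp only [ratioMatrix, gapRatio]
  rw [hsplit i j, hsplit j i]
  simp only [and_comm (a := j ∈ _) (b := i ∈ _)]
  exact ENNReal.mul_div_mul_left _ _ (h0 _) (htop _)

lemma IsGap.gapRatio_mem {m : Finset ι → ℝ≥0∞} (hm : IsGap m) : gapRatio m ∈ ratioSpace ι := by
  have hlim : ∀ A, Filter.Tendsto (fun n : ℕ => min (m A) ((n : ℝ≥0∞) + 1)) Filter.atTop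
      (nhds (m A)) := by
    intro A
    have h : Filter.Tendsto (fun n : ℕ => (n : ℝ≥0∞) + 1) Filter.atTop (nhds ∞) := by
      simpa using ENNReal.tendsto_nat_nhds_top.add_const 1
    simpa using (tendsto_const_nhds (x := m A)).min h
  refine mem_closure_of_tendsto (hm.tendsto_gapRatio hlim) (Filter.Eventually.of_forall fun n => ?_)
  refine gapRatio_mem_finiteRatios fun A => ⟨le_min (hm.1 A) (by simp), ?_⟩
  exact ((min_le_right _ _).trans_lt (by finiteness)).ne

/-- The weight of a cut: the smallest ratio across the cut, truncated below by `1`. -/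
noncomputable def cutWeight (M : ι → ι → ℝ≥0∞) (A : Finset ι) : ℝ≥0∞ :=
  max 1 ((A ×ˢ Aᶜ).inf fun p => M p.1 p.2)

lemma one_le_cutWeight (M : ι → ι → ℝ≥0∞) (A : Finset ι) : 1 ≤ cutWeight M A := le_max_left _ _

lemma cutWeight_le (M : ι → ι → ℝ≥0∞) {A : Finset ι} {i j : ι} (hi : i ∈ A) (hj : j ∉ A) :
    cutWeight M A ≤ max 1 (M i j) :=
  max_le_max le_rfl (Finset.inf_le (f := fun p : ι × ι => M p.1 p.2) (b := (i, j))
    (by simp [hi, hj]))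

lemma cutWeight_eq_one {M : ι → ι → ℝ≥0∞} {A : Finset ι} {i j : ι} (hi : i ∈ A) (hj : j ∉ A)
    (h : M i j ≤ 1) : cutWeight M A = 1 :=
  le_antisymm ((cutWeight_le M hi hj).trans (by simp [h])) (one_le_cutWeight M A)

lemma le_cutWeight {M : ι → ι → ℝ≥0∞} {A : Finset ι} {c : ℝ≥0∞}
    (h : ∀ i ∈ A, ∀ j ∉ A, c ≤ M i j) : c ≤ cutWeight M A := by
  refine le_max_of_le_right (Finset.le_inf fun p hp => ?_)
  rw [Finset.mem_product, Finset.mem_compl] at hp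
  exact h _ hp.1 _ hp.2

lemma continuous_cutWeight (A : Finset ι) :
    Continuous fun M : ι → ι → ℝ≥0∞ => cutWeight M A := by
  unfold cutWeight
  exact continuous_const.max (Continuous.finset_inf_apply fun p _ => by fun_prop)

lemma isGap_cutWeight {M : ι → ι → ℝ≥0∞} (hM : ∀ i j, M i j ≤ 1 ∨ M j i ≤ 1) :
    IsGap (cutWeight M) :=
  ⟨one_le_cutWeight M, fun i j => (hM i j).imp (fun h _ hi hj => cutWeight_eq_one hi hj h)
    (fun h _ hi hj => cutWeight_eq_one hi hj h)⟩

lemma sepProd_cutWeight_ratioMatrix {b : ι → ℝ≥0∞} (hb : ∀ i, b i ≠ 0 ∧ b i ≠ ∞) (i j : ι)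
    (hij : b j ≤ b i) : sepProd (cutWeight (ratioMatrix b)) i j = b i / b j := by
  have hone : ∀ {k l}, b k ≤ b l → ratioMatrix b k l ≤ 1 := fun h =>
    ENNReal.div_le_of_le_mul (by simpa using h)
  induction hN : (Finset.univ.filter fun k => b j < b k).card using Nat.strong_induction_on
    generalizing j with
  | _ N ih =>
    rcases hij.eq_or_lt with h | h
    · rw [h, ENNReal.div_self (hb i).1 (hb i).2]
      exact sepProd_eq_one fun A hi hj => cutWeight_eq_one hi hj (hone h.ge)
    set B := Finset.univ.filter fun k => b j < b k with hB
    have hiB : i ∈ B := by simp [hB, h]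
    obtain ⟨l, hlB, hl⟩ := Finset.exists_min_image B b ⟨i, hiB⟩
    have hjl : b j < b l := by simpa [hB] using hlB
    have hrec := ih _ (by
      rw [← hN]
      refine Finset.card_lt_card (Finset.ssubset_iff_subset_ne.2 ⟨fun k hk => ?_, fun he => ?_⟩)
      · simp only [Finset.mem_filter, Finset.mem_univ, true_and, hB] at hk ⊢
        exact hjl.trans hk
      · rw [← he] at hlB
        simp at hlB) l (hl i hiB) rfl
    have hfar : ∏ A with (i ∈ A ∧ j ∉ A) ∧ l ∉ A, cutWeight (ratioMatrix b) A = b i / b l := by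
      rw [← hrec, sepProd]
      refine Finset.prod_subset (fun A => by simp; tauto) fun A hA hA' => ?_
      simp only [Finset.mem_filter, Finset.mem_univ, true_and] at hA hA'
      exact cutWeight_eq_one (by tauto : j ∈ A) hA.2 (hone hjl.le)
    have hnear : ∏ A with (i ∈ A ∧ j ∉ A) ∧ l ∈ A, cutWeight (ratioMatrix b) A = b l / b j := by
      rw [Finset.prod_eq_single B]
      · refine le_antisymm ((cutWeight_le _ hlB (by simp [hB])).trans (max_le ?_ le_rfl))
          (le_cutWeight fun k hk k' hk' => ?_)
        · rw [ENNReal.le_div_iff_mul_le (Or.inl (hb j).1) (Or.inl (hb j).2), one_mul]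
          exact hjl.le
        · exact ENNReal.div_le_div (hl k hk) (by simpa [hB] using hk')
      · intro A hA hne
        simp only [Finset.mem_filter, Finset.mem_univ, true_and] at hA
        by_cases hAB : A ⊆ B
        · obtain ⟨k, hk, hkA⟩ := Finset.exists_of_ssubset (hAB.ssubset_of_ne hne)
          exact cutWeight_eq_one hA.2 hkA (hone (hl k hk))
        · obtain ⟨k, hk, hkB⟩ := Finset.not_subset.1 hAB
          exact cutWeight_eq_one hk hA.1.2 (hone (by simpa [hB] using hkB))
      · intro hB'
        exact (hB' (by simp [hiB, hlB]; simp [hB])).elim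
    rw [sepProd, ← Finset.prod_filter_mul_prod_filter_not _ (fun A => l ∈ A),
      Finset.filter_filter, Finset.filter_filter, hfar, hnear, mul_comm,
      ENNReal.div_mul_div_cancel_middle (hb l).1 (hb l).2]

lemma gapRatio_cutWeight {ρ : ι → ι → ℝ≥0∞} (hρ : ρ ∈ ratioSpace ι) :
    gapRatio (cutWeight ρ) = ρ := by
  have hgap : ∀ ρ ∈ ratioSpace ι, IsGap (cutWeight ρ) := fun ρ hρ =>
    isGap_cutWeight (ratioSpace_le_one_or hρ)
  refine Set.EqOn.of_subset_closure (s := finiteRatios ι) (t := ratioSpace ι)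
    (f := fun ρ => gapRatio (cutWeight ρ)) (g := id) ?_ ?_ continuousOn_id subset_closure
    subset_rfl hρ
  · intro ρ hρ
    have hg := hgap ρ (subset_closure hρ)
    obtain ⟨b, hb, rfl⟩ := hρ
    have key : ∀ i j, b j ≤ b i → gapRatio (cutWeight (ratioMatrix b)) i j = b i / b j := by
      intro i j hij
      rw [gapRatio, sepProd_cutWeight_ratioMatrix hb i j hij, sepProd_eq_one, div_one]
      exact fun A hA hA' => cutWeight_eq_one hA hA'
        (ENNReal.div_le_of_le_mul (by simpa using hij))
    funext i j
    rcases le_total (b j) (b i) with h | h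
    · exact key i j h
    · change gapRatio (cutWeight (ratioMatrix b)) i j = b i / b j
      rw [← hg.inv_gapRatio, key j i h, ENNReal.inv_div (Or.inl (hb i).2) (Or.inl (hb i).1)]
  · exact fun ρ hρ => (hgap ρ hρ).tendsto_gapRatio fun A =>
      ((continuous_cutWeight A).tendsto ρ).mono_left nhdsWithin_le_nhds

end Gaps

section Contraction

/-- A space that is dominated by a contractible space is contractible. -/
lemma contractibleSpace_of_comp_homotopic_id {X Y : Type*} [TopologicalSpace X]
    [TopologicalSpace Y] [ContractibleSpace Y] (f : C(X, Y)) (g : C(Y, X))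
    (h : (g.comp f).Homotopic (ContinuousMap.id X)) : ContractibleSpace X := by
  rw [contractible_iff_id_nullhomotopic]
  obtain ⟨x, hx⟩ := ((id_nullhomotopic Y).comp_left f).comp_right g
  exact ⟨x, h.symm.trans hx⟩

variable {ι : Type*}

/-- The ratio matrices with prescribed entries `1` and `∞`. -/
def ratioFace (E T : ι → ι → Prop) : Set (ι → ι → ℝ≥0∞) :=
  {ρ | ρ ∈ ratioSpace ι ∧ (∀ i j, E i j → ρ i j = 1) ∧ ∀ i j, T i j → ρ i j = ∞}

/-- The convex set of levels compatible with prescribed equalities and unit gaps. -/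
def levelFace (E T : ι → ι → Prop) : Set (ι → ℝ) :=
  {u | (∀ i j, E i j → u i = u j) ∧ ∀ i j, T i j → u j + 1 ≤ u i}

lemma convex_levelFace (E T : ι → ι → Prop) : Convex ℝ (levelFace E T) := by
  intro u hu v hv a b ha hb hab
  refine ⟨fun i j h => ?_, fun i j h => ?_⟩
  · simp [hu.1 i j h, hv.1 i j h]
  · have h₁ := mul_le_mul_of_nonneg_left (hu.2 i j h) ha
    have h₂ := mul_le_mul_of_nonneg_left (hv.2 i j h) hb
    simp only [Pi.add_apply, Pi.smul_apply, smul_eq_mul]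
    linarith

variable [Fintype ι]

/-- A bounded level function that is monotone for the preorder of a ratio matrix. -/
noncomputable def level (ρ : ι → ι → ℝ≥0∞) (i : ι) : ℝ := 2 * ∑ k, ((1 + ρ k i)⁻¹).toReal

lemma continuous_level : Continuous (level : (ι → ι → ℝ≥0∞) → ι → ℝ) := by
  refine continuous_pi fun i => continuous_const.mul (continuous_finsetSum _ fun k _ => ?_)
  refine ENNReal.continuousOn_toReal.comp_continuous (by fun_prop) fun ρ => ?_
  simp

lemma toReal_inv_one_add_le {a b : ℝ≥0∞} (h : a ≤ b) :
    ((1 + b)⁻¹).toReal ≤ ((1 + a)⁻¹).toReal :=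
  ENNReal.toReal_mono (by simp) (ENNReal.inv_le_inv.2 (by gcongr))

lemma level_le {ρ : ι → ι → ℝ≥0∞} (hρ : ρ ∈ ratioSpace ι) {i j : ι} (h : 1 ≤ ρ i j) :
    level ρ j ≤ level ρ i := by
  refine mul_le_mul_of_nonneg_left (Finset.sum_le_sum fun k _ => ?_) zero_le_two
  exact toReal_inv_one_add_le (ratioSpace_anti hρ h k)

lemma level_eq {ρ : ι → ι → ℝ≥0∞} (hρ : ρ ∈ ratioSpace ι) {i j : ι} (h : ρ i j = 1) :
    level ρ i = level ρ j := by
  refine le_antisymm (level_le hρ ?_) (level_le hρ h.ge)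
  rw [← ratioSpace_inv hρ i j, h, inv_one]

lemma level_add_one_le {ρ : ι → ι → ℝ≥0∞} (hρ : ρ ∈ ratioSpace ι) {i j : ι} (h : ρ i j = ∞) :
    level ρ j + 1 ≤ level ρ i := by
  have hnonneg : ∀ k ∈ Finset.univ, 0 ≤ ((1 + ρ k i)⁻¹).toReal - ((1 + ρ k j)⁻¹).toReal :=
    fun k _ => sub_nonneg.2 (toReal_inv_one_add_le (ratioSpace_anti hρ (by simp [h]) k))
  have hle := Finset.single_le_sum hnonneg (Finset.mem_univ i)
  rw [Finset.sum_sub_distrib, ratioSpace_self hρ, h, one_add_one_eq_two] at hle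
  simp only [add_top, ENNReal.inv_top, ENNReal.toReal_zero, ENNReal.toReal_inv,
    ENNReal.toReal_ofNat] at hle
  unfold level
  simp only [ENNReal.toReal_inv]
  linarith

/-- Ratios that are infinite across gaps of length at least `1 / (card ι + 1)`. -/
noncomputable def spread (u : ι → ℝ) : ι → ι → ℝ≥0∞ :=
  fun i j => (ENNReal.ofReal (1 - (Fintype.card ι + 1) * (u i - u j)))⁻¹

lemma continuous_spread : Continuous (spread : (ι → ℝ) → ι → ι → ℝ≥0∞) := by
  unfold spread
  refine continuous_pi fun i => continuous_pi fun j => ?_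
  exact (ENNReal.continuous_ofReal.comp (by fun_prop)).inv

lemma spread_le_one {u : ι → ℝ} {i j : ι} (h : u i ≤ u j) : spread u i j ≤ 1 := by
  rw [spread, ENNReal.inv_le_one, ENNReal.one_le_ofReal]
  nlinarith [Nat.cast_nonneg (α := ℝ) (Fintype.card ι)]

lemma spread_le_one_or (u : ι → ℝ) (i j : ι) : spread u i j ≤ 1 ∨ spread u j i ≤ 1 :=
  (le_total (u i) (u j)).imp spread_le_one spread_le_one

lemma spread_eq_top {u : ι → ℝ} {i j : ι} (h : 1 ≤ (Fintype.card ι + 1) * (u i - u j)) :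
    spread u i j = ∞ := by
  rw [spread, ENNReal.inv_eq_top, ENNReal.ofReal_eq_zero]
  linarith

lemma exists_gap {u : ι → ℝ} {i j : ι} (h : u j + 1 ≤ u i) :
    ∃ A : Finset ι, i ∈ A ∧ j ∉ A ∧
      ∀ k ∈ A, ∀ l ∉ A, 1 ≤ (Fintype.card ι + 1) * (u k - u l) := by
  classical
  set N : ℝ := Fintype.card ι + 1 with hN
  have hN1 : 1 ≤ N := by simp [hN]
  obtain ⟨m, hm, hm'⟩ := Finset.exists_mem_notMem_of_card_lt_card
    (s := Finset.univ.image fun k => ⌊N * (u i - u k)⌋)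
    (t := (Finset.range (Fintype.card ι + 1)).image (fun m : ℕ => (m : ℤ))) (by
      rw [Finset.card_image_of_injective _ Nat.cast_injective, Finset.card_range]
      exact Nat.lt_succ_of_le Finset.card_image_le)
  simp only [Finset.mem_image, Finset.mem_range, Finset.mem_univ, true_and, not_exists] at hm hm'
  obtain ⟨m, hlt, rfl⟩ := hm
  have hdich : ∀ k, N * (u i - u k) < m ∨ m + 1 ≤ N * (u i - u k) := by
    intro k
    by_contra! hcon
    exact hm' k (Int.floor_eq_iff.2 (by simpa using hcon))
  have hmN : (m : ℝ) + 1 ≤ N := by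
    rw [hN]
    exact_mod_cast hlt
  refine ⟨Finset.univ.filter fun k => N * (u i - u k) < m, ?_, ?_, ?_⟩
  · rcases hdich i with hi | hi
    · simpa using hi
    · rw [sub_self, mul_zero] at hi
      have : (0 : ℝ) ≤ m := Nat.cast_nonneg m
      linarith
  · simp only [Finset.mem_filter, Finset.mem_univ, true_and, not_lt]
    nlinarith
  · intro k hk l hl
    simp only [Finset.mem_filter, Finset.mem_univ, true_and] at hk hl
    have := (hdich l).resolve_left hl
    linarith

variable [DecidableEq ι]

/-- Interpolation between the cut weights of a ratio matrix and those of levels. -/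
noncomputable def interpWeight (s : ℝ) (ρ : ι → ι → ℝ≥0∞) (u : ι → ℝ) (A : Finset ι) : ℝ≥0∞ :=
  (ENNReal.ofReal (1 - s) * (cutWeight ρ A)⁻¹ + ENNReal.ofReal s * (cutWeight (spread u) A)⁻¹)⁻¹

lemma inv_cutWeight_ne_top (M : ι → ι → ℝ≥0∞) (A : Finset ι) : (cutWeight M A)⁻¹ ≠ ∞ :=
  ENNReal.inv_ne_top.2 (zero_lt_one.trans_le (one_le_cutWeight M A)).ne'

lemma continuous_interpWeight {X : Type*} [TopologicalSpace X] {s : X → ℝ}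
    {ρ : X → ι → ι → ℝ≥0∞} {u : X → ι → ℝ} (hs : Continuous s) (hρ : Continuous ρ)
    (hu : Continuous u) (A : Finset ι) :
    Continuous fun x => interpWeight (s x) (ρ x) (u x) A := by
  have hmul : ∀ {a b : X → ℝ≥0∞}, Continuous a → Continuous b → (∀ x, a x ≠ ∞) →
      (∀ x, b x ≠ ∞) → Continuous fun x => a x * b x := fun ha hb ha' hb' =>
    continuous_iff_continuousAt.2 fun x => ENNReal.Tendsto.mul (ha.tendsto x) (Or.inr (hb' x))
      (hb.tendsto x) (Or.inr (ha' x))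
  refine Continuous.inv (Continuous.add (hmul ?_ ?_ ?_ ?_) (hmul ?_ ?_ ?_ ?_))
  · exact ENNReal.continuous_ofReal.comp (continuous_const.sub hs)
  · exact ((continuous_cutWeight A).comp hρ).inv
  · simp
  · exact fun x => inv_cutWeight_ne_top _ _
  · exact ENNReal.continuous_ofReal.comp hs
  · exact ((continuous_cutWeight A).comp (continuous_spread.comp hu)).inv
  · simp
  · exact fun x => inv_cutWeight_ne_top _ _

lemma ofReal_one_sub_add {s : ℝ} (h0 : 0 ≤ s) (h1 : s ≤ 1) :
    ENNReal.ofReal (1 - s) + ENNReal.ofReal s = 1 := by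
  rw [← ENNReal.ofReal_add (sub_nonneg.2 h1) h0, sub_add_cancel, ENNReal.ofReal_one]

lemma interpWeight_eq_one {s : ℝ} (h0 : 0 ≤ s) (h1 : s ≤ 1) {ρ : ι → ι → ℝ≥0∞} {u : ι → ℝ}
    {A : Finset ι} {i j : ι} (hi : i ∈ A) (hj : j ∉ A) (hρ : ρ i j ≤ 1) (hu : u i ≤ u j) :
    interpWeight s ρ u A = 1 := by
  rw [interpWeight, cutWeight_eq_one hi hj hρ, cutWeight_eq_one hi hj (spread_le_one hu)]
  simp [ofReal_one_sub_add h0 h1]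

lemma one_le_interpWeight {s : ℝ} (h0 : 0 ≤ s) (h1 : s ≤ 1) (ρ : ι → ι → ℝ≥0∞) (u : ι → ℝ)
    (A : Finset ι) : 1 ≤ interpWeight s ρ u A := by
  rw [interpWeight, ENNReal.one_le_inv, ← ofReal_one_sub_add h0 h1]
  exact add_le_add (mul_le_of_le_one_right' (ENNReal.inv_le_one.2 (one_le_cutWeight _ _)))
    (mul_le_of_le_one_right' (ENNReal.inv_le_one.2 (one_le_cutWeight _ _)))

lemma isGap_interpWeight {s : ℝ} (h0 : 0 ≤ s) (h1 : s ≤ 1) {ρ : ι → ι → ℝ≥0∞}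
    (hρ : ρ ∈ ratioSpace ι) : IsGap (interpWeight s ρ (level ρ)) := by
  refine ⟨one_le_interpWeight h0 h1 _ _, fun i j => ?_⟩
  have key : ∀ i j, ρ i j ≤ 1 → ∀ A, i ∈ A → j ∉ A → interpWeight s ρ (level ρ) A = 1 := by
    intro i j h A hi hj
    refine interpWeight_eq_one h0 h1 hi hj h (level_le hρ ?_)
    rwa [← ratioSpace_inv hρ i j, ENNReal.one_le_inv]
  exact (ratioSpace_le_one_or hρ i j).imp (key i j) (key j i)

lemma gapRatio_interpWeight_mem {E T : ι → ι → Prop} {s : ℝ} (h0 : 0 ≤ s) (h1 : s ≤ 1)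
    {ρ : ι → ι → ℝ≥0∞} (hρ : ρ ∈ ratioFace E T) :
    gapRatio (interpWeight s ρ (level ρ)) ∈ ratioFace E T := by
  have hgap := isGap_interpWeight h0 h1 hρ.1
  refine ⟨hgap.gapRatio_mem, fun i j h => ?_, fun i j h => ?_⟩
  · have hij := hρ.2.1 i j h
    have hji : ρ j i = 1 := by rw [← ratioSpace_inv hρ.1 i j, hij, inv_one]
    exact gapRatio_eq_one
      (fun A hi hj => interpWeight_eq_one h0 h1 hi hj hij.le (level_eq hρ.1 hij).le)
      (fun A hi hj => interpWeight_eq_one h0 h1 hi hj hji.le (level_eq hρ.1 hji).le)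
  · have hij := hρ.2.2 i j h
    refine hgap.gapRatio_eq_top (A := Finset.univ.filter fun k => ρ k j = ∞) (by simp [hij])
      (by simp [ratioSpace_self hρ.1]) ?_
    have htop : ∀ k ∈ Finset.univ.filter (fun k => ρ k j = ∞),
        ∀ l ∉ Finset.univ.filter (fun k => ρ k j = ∞), ρ k l = ∞ := by
      intro k hk l hl
      simp only [Finset.mem_filter, Finset.mem_univ, true_and] at hk hl
      have hjl : ρ j l ≠ 0 := by rwa [← ratioSpace_inv hρ.1 l j, ENNReal.inv_ne_zero]
      rw [← ratioSpace_mul hρ.1 k j l (Or.inl (by simp [hk])) (Or.inl hjl), hk,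
        ENNReal.top_mul hjl]
    have h₁ : cutWeight ρ (Finset.univ.filter fun k => ρ k j = ∞) = ∞ :=
      top_le_iff.1 (le_cutWeight fun k hk l hl => (htop k hk l hl).ge)
    have h₂ : cutWeight (spread (level ρ)) (Finset.univ.filter fun k => ρ k j = ∞) = ∞ := by
      refine top_le_iff.1 (le_cutWeight fun k hk l hl => (spread_eq_top ?_).ge)
      have := level_add_one_le hρ.1 (htop k hk l hl)
      nlinarith [Nat.cast_nonneg (α := ℝ) (Fintype.card ι)]
    simp [interpWeight, h₁, h₂]

lemma gapRatio_spread_mem {E T : ι → ι → Prop} {u : ι → ℝ} (hu : u ∈ levelFace E T) :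
    gapRatio (cutWeight (spread u)) ∈ ratioFace E T := by
  have hgap := isGap_cutWeight (spread_le_one_or u)
  refine ⟨hgap.gapRatio_mem, fun i j h => ?_, fun i j h => ?_⟩
  · have hij := hu.1 i j h
    exact gapRatio_eq_one (fun A hi hj => cutWeight_eq_one hi hj (spread_le_one hij.le))
      (fun A hi hj => cutWeight_eq_one hi hj (spread_le_one hij.ge))
  · obtain ⟨A, hi, hj, hA⟩ := exists_gap (hu.2 i j h)
    exact hgap.gapRatio_eq_top hi hj
      (top_le_iff.1 (le_cutWeight fun k hk l hl => (spread_eq_top (hA k hk l hl)).ge))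

lemma contractibleSpace_ratioFace {E T : ι → ι → Prop} (hne : (ratioFace E T).Nonempty) :
    ContractibleSpace (ratioFace E T) := by
  have hlevel : ∀ ρ ∈ ratioFace E T, level ρ ∈ levelFace E T := fun ρ hρ =>
    ⟨fun i j h => level_eq hρ.1 (hρ.2.1 i j h), fun i j h => level_add_one_le hρ.1 (hρ.2.2 i j h)⟩
  obtain ⟨ρ₀, hρ₀⟩ := hne
  have : ContractibleSpace (levelFace E T) :=
    (convex_levelFace E T).contractibleSpace ⟨_, hlevel ρ₀ hρ₀⟩
  let f : C(ratioFace E T, levelFace E T) :=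
    ⟨fun ρ => ⟨level ρ.1, hlevel _ ρ.2⟩, (continuous_level.comp continuous_subtype_val).subtype_mk _⟩
  have hg : Continuous fun u : levelFace E T => gapRatio (cutWeight (spread u.1)) :=
    continuous_iff_continuousAt.2 fun u =>
      (isGap_cutWeight (spread_le_one_or u.1)).tendsto_gapRatio fun A =>
        ((continuous_cutWeight A).comp (continuous_spread.comp continuous_subtype_val)).tendsto u
  let g : C(levelFace E T, ratioFace E T) :=
    ⟨fun u => ⟨gapRatio (cutWeight (spread u.1)), gapRatio_spread_mem u.2⟩, hg.subtype_mk _⟩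
  have hweight : ∀ A, Continuous fun x : unitInterval × ratioFace E T =>
      interpWeight (x.1 : ℝ) x.2.1 (level x.2.1) A :=
    continuous_interpWeight (continuous_subtype_val.comp continuous_fst)
      (continuous_subtype_val.comp continuous_snd)
      (continuous_level.comp (continuous_subtype_val.comp continuous_snd))
  have hH : Continuous fun x : unitInterval × ratioFace E T =>
      gapRatio (interpWeight (x.1 : ℝ) x.2.1 (level x.2.1)) :=
    continuous_iff_continuousAt.2 fun x =>
      (isGap_interpWeight x.1.2.1 x.1.2.2 x.2.2.1).tendsto_gapRatio fun A => (hweight A).tendsto x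
  let H : C(unitInterval × ratioFace E T, ratioFace E T) :=
    ⟨fun x => ⟨gapRatio (interpWeight (x.1 : ℝ) x.2.1 (level x.2.1)),
      gapRatio_interpWeight_mem x.1.2.1 x.1.2.2 x.2.2⟩, hH.subtype_mk _⟩
  have hH₀ : ∀ ρ : ratioFace E T, H (0, ρ) = ρ := fun ρ => Subtype.ext (by
    have h : interpWeight 0 ρ.1 (level ρ.1) = cutWeight ρ.1 := by
      funext A
      simp [interpWeight]
    exact (congrArg gapRatio h).trans (gapRatio_cutWeight ρ.2.1))
  have hH₁ : ∀ ρ : ratioFace E T, H (1, ρ) = g (f ρ) := fun ρ => Subtype.ext (by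
    have h : interpWeight 1 ρ.1 (level ρ.1) = cutWeight (spread (level ρ.1)) := by
      funext A
      simp [interpWeight]
    exact congrArg gapRatio h)
  exact contractibleSpace_of_comp_homotopic_id f g
    (ContinuousMap.Homotopic.symm ⟨⟨H, hH₀, hH₁⟩⟩)

end Contraction

section Share

variable {ι : Type*}

/-- The share of the scale `m` in the total scale of `I`, in terms of ratios. -/
noncomputable def share (ρ : ι → ι → ℝ≥0∞) (I : Finset ι) (m : ι) : ℝ≥0∞ := (∑ k ∈ I, ρ k m)⁻¹

lemma continuous_share (I : Finset ι) (m : ι) :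
    Continuous fun ρ : ι → ι → ℝ≥0∞ => share ρ I m :=
  (continuous_finsetSum _ fun k _ => by fun_prop).inv

lemma share_ratioMatrix {b : ι → ℝ≥0∞} (hb : ∀ i, b i ≠ 0 ∧ b i ≠ ∞) (I : Finset ι) (m : ι) :
    share (ratioMatrix b) I m = b m / ∑ k ∈ I, b k := by
  simp only [share, ratioMatrix, div_eq_mul_inv]
  rw [← Finset.sum_mul, ← div_eq_mul_inv, ENNReal.inv_div (Or.inl (hb m).2) (Or.inl (hb m).1),
    div_eq_mul_inv]

lemma sum_share_ratioMatrix {b : ι → ℝ≥0∞} (hb : ∀ i, b i ≠ 0 ∧ b i ≠ ∞) (I J : Finset ι) :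
    ∑ m ∈ I, share (ratioMatrix b) J m = (∑ k ∈ I, b k) / ∑ k ∈ J, b k := by
  simp only [share_ratioMatrix hb, div_eq_mul_inv, Finset.sum_mul]

lemma sum_share_self {ρ : ι → ι → ℝ≥0∞} (hρ : ρ ∈ ratioSpace ι) {I : Finset ι}
    (hI : I.Nonempty) : ∑ m ∈ I, share ρ I m = 1 := by
  have hcl : IsClosed {ρ : ι → ι → ℝ≥0∞ | ∑ m ∈ I, share ρ I m = 1} :=
    isClosed_eq (continuous_finsetSum _ fun m _ => continuous_share I m) continuous_const
  refine closure_minimal ?_ hcl hρ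
  rintro _ ⟨b, hb, rfl⟩
  obtain ⟨i, hi⟩ := hI
  rw [Set.mem_ofPred_eq, sum_share_ratioMatrix hb]
  refine ENNReal.div_self (fun h => (hb i).1 ?_) (ENNReal.sum_ne_top.2 fun k _ => (hb k).2)
  exact (Finset.sum_eq_zero_iff.1 h) i hi

lemma share_le_one {ρ : ι → ι → ℝ≥0∞} (hρ : ρ ∈ ratioSpace ι) {I : Finset ι} {m : ι}
    (hm : m ∈ I) : share ρ I m ≤ 1 := by
  rw [share, ENNReal.inv_le_one, ← ratioSpace_self hρ m]
  exact Finset.single_le_sum (f := fun k => ρ k m) (fun _ _ => zero_le) hm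

lemma share_ne_top {ρ : ι → ι → ℝ≥0∞} (hρ : ρ ∈ ratioSpace ι) {I : Finset ι} {m : ι}
    (hm : m ∈ I) : share ρ I m ≠ ∞ :=
  ((share_le_one hρ hm).trans_lt ENNReal.one_lt_top).ne

lemma ratio_ne_top_of_share_ne_zero {ρ : ι → ι → ℝ≥0∞} {I : Finset ι} {i j : ι} (hi : i ∈ I)
    (h : share ρ I j ≠ 0) : ρ i j ≠ ∞ :=
  ENNReal.sum_ne_top.1 (ENNReal.inv_ne_zero.1 h) i hi

lemma share_eq_zero {ρ : ι → ι → ℝ≥0∞} (hρ : ρ ∈ ratioSpace ι) {I : Finset ι} {i j : ι}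
    (hj : j ∈ I) (h : ρ i j = 0) : share ρ I i = 0 := by
  rw [share, ENNReal.inv_eq_zero, ENNReal.sum_eq_top]
  exact ⟨j, hj, by rw [← ratioSpace_inv hρ i j, h, ENNReal.inv_zero]⟩

lemma share_eq_ratio_mul_share {ρ : ι → ι → ℝ≥0∞} (hρ : ρ ∈ ratioSpace ι) {I : Finset ι}
    {i j : ι} (hi : i ∈ I) (hj : j ∈ I) (h : share ρ I j ≠ 0) :
    share ρ I i = ρ i j * share ρ I j := by
  rcases eq_or_ne (ρ i j) 0 with h0 | h0
  · rw [share_eq_zero hρ hj h0, h0, zero_mul]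
  have htop := ratio_ne_top_of_share_ne_zero hi h
  have hji : ρ j i ≠ 0 ∧ ρ j i ≠ ∞ := by
    rw [← ratioSpace_inv hρ i j]
    exact ⟨ENNReal.inv_ne_zero.2 htop, ENNReal.inv_ne_top.2 h0⟩
  have hsum : ∑ k ∈ I, ρ k i = (∑ k ∈ I, ρ k j) * ρ j i := by
    rw [Finset.sum_mul]
    refine Finset.sum_congr rfl fun k hk => (ratioSpace_mul hρ k j i (Or.inr hji.2)
      (Or.inl hji.1)).symm
  rw [share, hsum, ENNReal.mul_inv (Or.inr hji.2) (Or.inr hji.1), ratioSpace_inv hρ, mul_comm,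
    share]

/-- The ratio matrices with the same shares as `ρ₀` for a family of subsets. -/
def shareFiber (F : Set (Finset ι)) (ρ₀ : ι → ι → ℝ≥0∞) : Set (ι → ι → ℝ≥0∞) :=
  {ρ | ρ ∈ ratioSpace ι ∧ ∀ I ∈ F, ∀ m ∈ I, share ρ I m = share ρ₀ I m}

/-- The pairs of indices whose ratio is determined by the shares of `ρ₀`. -/
def Determined (F : Set (Finset ι)) (ρ₀ : ι → ι → ℝ≥0∞) (i j : ι) : Prop :=
  ∃ I ∈ F, i ∈ I ∧ j ∈ I ∧ share ρ₀ I j ≠ 0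

lemma Determined.ne_top {F : Set (Finset ι)} {ρ₀ : ι → ι → ℝ≥0∞} {i j : ι}
    (h : Determined F ρ₀ i j) : ρ₀ i j ≠ ∞ := by
  obtain ⟨I, -, hi, -, h⟩ := h
  exact ratio_ne_top_of_share_ne_zero hi h

lemma mem_shareFiber_iff {F : Set (Finset ι)} {ρ₀ ρ : ι → ι → ℝ≥0∞} (hρ₀ : ρ₀ ∈ ratioSpace ι)
    (hρ : ρ ∈ ratioSpace ι) :
    ρ ∈ shareFiber F ρ₀ ↔ ∀ i j, Determined F ρ₀ i j → ρ i j = ρ₀ i j := by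
  constructor
  · rintro ⟨-, hshare⟩ i j ⟨I, hI, hi, hj, h⟩
    have h₀ := share_eq_ratio_mul_share hρ₀ hi hj h
    have h₁ := share_eq_ratio_mul_share hρ hi hj (by rwa [hshare I hI j hj])
    rw [hshare I hI i hi, hshare I hI j hj, h₀] at h₁
    exact ((ENNReal.mul_left_inj h (share_ne_top hρ₀ hj)).1 h₁).symm
  · refine fun hdet => ⟨hρ, fun I hI m hm => ?_⟩
    by_cases h : share ρ₀ I m = 0
    · obtain ⟨j, hj, hj0⟩ : ∃ j ∈ I, share ρ₀ I j ≠ 0 := by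
        by_contra! hcon
        simpa [Finset.sum_eq_zero hcon] using sum_share_self hρ₀ ⟨m, hm⟩
      have hmj := share_eq_ratio_mul_share hρ₀ hm hj hj0
      rw [h, eq_comm, mul_eq_zero, or_iff_left hj0, ← hdet m j ⟨I, hI, hm, hj, hj0⟩] at hmj
      rw [h, share_eq_zero hρ hj hmj]
    · rw [share, share, Finset.sum_congr rfl fun k hk => hdet k m ⟨I, hI, hk, hm, h⟩]

lemma ENNReal.div_mul_inv_div_inv {a b : ℝ≥0∞} (ha : a ≠ 0) (ha' : a ≠ ∞) (hb : b ≠ 0)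
    (hb' : b ≠ ∞) : a / b * (a⁻¹ / b⁻¹) = 1 := by
  rw [div_eq_mul_inv, div_eq_mul_inv, inv_inv, mul_mul_mul_comm, ENNReal.mul_inv_cancel ha ha',
    ENNReal.inv_mul_cancel hb hb', one_mul]

/-- Multiplication of the scales by a family of factors. -/
noncomputable def rescale (c : ι → ℝ≥0∞) (ρ : ι → ι → ℝ≥0∞) : ι → ι → ℝ≥0∞ :=
  fun i j => c i / c j * ρ i j

lemma continuous_rescale {c : ι → ℝ≥0∞} (hc : ∀ i, c i ≠ 0 ∧ c i ≠ ∞) :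
    Continuous (rescale c) :=
  continuous_pi fun i => continuous_pi fun j =>
    (ENNReal.continuous_const_mul (ENNReal.div_ne_top (hc i).2 (hc j).1)).comp
      (continuous_apply_apply i j)

lemma rescale_mem {c : ι → ℝ≥0∞} (hc : ∀ i, c i ≠ 0 ∧ c i ≠ ∞) {ρ : ι → ι → ℝ≥0∞}
    (hρ : ρ ∈ ratioSpace ι) : rescale c ρ ∈ ratioSpace ι := by
  refine map_mem_closure (continuous_rescale hc) hρ ?_
  rintro _ ⟨b, hb, rfl⟩
  refine ⟨fun i => c i * b i, fun i => ⟨mul_ne_zero (hc i).1 (hb i).1,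
    ENNReal.mul_ne_top (hc i).2 (hb i).2⟩, ?_⟩
  funext i j
  simp only [ratioMatrix, rescale, div_eq_mul_inv]
  rw [ENNReal.mul_inv (Or.inl (hc j).1) (Or.inl (hc j).2)]
  ring

lemma rescale_rescale_inv {c : ι → ℝ≥0∞} (hc : ∀ i, c i ≠ 0 ∧ c i ≠ ∞)
    (ρ : ι → ι → ℝ≥0∞) : rescale c (rescale (fun i => (c i)⁻¹) ρ) = ρ := by
  funext i j
  rw [rescale, rescale, ← mul_assoc,
    ENNReal.div_mul_inv_div_inv (hc i).1 (hc i).2 (hc j).1 (hc j).2, one_mul]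

/-- Scales realizing all the ratios of `ρ` that are neither `0` nor `∞`. -/
lemma exists_scale {ρ : ι → ι → ℝ≥0∞} (hρ : ρ ∈ ratioSpace ι) :
    ∃ c : ι → ℝ≥0∞, (∀ i, c i ≠ 0 ∧ c i ≠ ∞) ∧
      ∀ i j, ρ i j ≠ 0 → ρ i j ≠ ∞ → c i / c j = ρ i j := by
  let r : Setoid ι :=
    { r := fun i j => ρ i j ≠ 0 ∧ ρ i j ≠ ∞
      iseqv :=
        { refl := fun i => by simp [ratioSpace_self hρ]
          symm := fun {i j} h => by
            rw [← ratioSpace_inv hρ i j]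
            exact ⟨ENNReal.inv_ne_zero.2 h.2, ENNReal.inv_ne_top.2 h.1⟩
          trans := fun {i j k} h h' => by
            rw [← ratioSpace_mul hρ i j k (Or.inl h.1) (Or.inl h'.1)]
            exact ⟨mul_ne_zero h.1 h'.1, ENNReal.mul_ne_top h.2 h'.2⟩ } }
  have hout : ∀ i, ρ i (Quotient.mk r i).out ≠ 0 ∧ ρ i (Quotient.mk r i).out ≠ ∞ := fun i =>
    r.symm (Quotient.mk_out (s := r) i)
  refine ⟨fun i => ρ i (Quotient.mk r i).out, hout, fun i j h0 htop => ?_⟩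
  have hq : Quotient.mk r i = Quotient.mk r j := Quotient.sound ⟨h0, htop⟩
  have hj := hout j
  simp only [hq]
  rw [← ratioSpace_mul hρ i j _ (Or.inl h0) (Or.inl hj.1), mul_div_assoc,
    ENNReal.div_self hj.1 hj.2, mul_one]

variable [Fintype ι] [DecidableEq ι]

lemma contractibleSpace_shareFiber (F : Set (Finset ι)) {ρ₀ : ι → ι → ℝ≥0∞}
    (hρ₀ : ρ₀ ∈ ratioSpace ι) : ContractibleSpace (shareFiber F ρ₀) := by
  obtain ⟨c, hc, hcρ⟩ := exists_scale hρ₀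
  have hc' : ∀ i, (c i)⁻¹ ≠ 0 ∧ (c i)⁻¹ ≠ ∞ := fun i =>
    ⟨ENNReal.inv_ne_zero.2 (hc i).2, ENNReal.inv_ne_top.2 (hc i).1⟩
  let E : ι → ι → Prop := fun i j => Determined F ρ₀ i j ∧ ρ₀ i j ≠ 0
  let T : ι → ι → Prop := fun i j => Determined F ρ₀ j i ∧ ρ₀ j i = 0
  have hto : ∀ ρ ∈ shareFiber F ρ₀, rescale (fun i => (c i)⁻¹) ρ ∈ ratioFace E T := by
    intro ρ hρ
    have hdet := (mem_shareFiber_iff hρ₀ hρ.1).1 hρ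
    refine ⟨rescale_mem hc' hρ.1, ?_, ?_⟩
    · rintro i j ⟨h, h0⟩
      rw [rescale, hdet i j h, ← hcρ i j h0 h.ne_top, mul_comm,
        ENNReal.div_mul_inv_div_inv (hc i).1 (hc i).2 (hc j).1 (hc j).2]
    · rintro i j ⟨h, h0⟩
      rw [rescale, ← ratioSpace_inv hρ.1 j i, hdet j i h, h0, ENNReal.inv_zero,
        ENNReal.mul_top (ENNReal.div_ne_zero.2 ⟨(hc' i).1, (hc' j).2⟩)]
  have hfrom : ∀ ρ ∈ ratioFace E T, rescale c ρ ∈ shareFiber F ρ₀ := by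
    intro ρ hρ
    refine (mem_shareFiber_iff hρ₀ (rescale_mem hc hρ.1)).2 fun i j h => ?_
    by_cases h0 : ρ₀ i j = 0
    · rw [rescale, ← ratioSpace_inv hρ.1 j i, hρ.2.2 j i ⟨h, h0⟩, ENNReal.inv_top, mul_zero, h0]
    · rw [rescale, hρ.2.1 i j ⟨h, h0⟩, mul_one, hcρ i j h0 h.ne_top]
  have := contractibleSpace_ratioFace
    ⟨_, hto ρ₀ ((mem_shareFiber_iff hρ₀ hρ₀).2 fun _ _ _ => rfl)⟩
  let f : C(shareFiber F ρ₀, ratioFace E T) :=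
    ⟨fun ρ => ⟨_, hto ρ.1 ρ.2⟩, ((continuous_rescale hc').comp continuous_subtype_val).subtype_mk _⟩
  let g : C(ratioFace E T, shareFiber F ρ₀) :=
    ⟨fun ρ => ⟨_, hfrom ρ.1 ρ.2⟩, ((continuous_rescale hc).comp continuous_subtype_val).subtype_mk _⟩
  have hgf : g.comp f = ContinuousMap.id _ :=
    ContinuousMap.ext fun ρ => Subtype.ext (rescale_rescale_inv hc ρ.1)
  exact contractibleSpace_of_comp_homotopic_id f g (hgf ▸ ContinuousMap.Homotopic.refl _)

end Share

section Configurations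

variable {n : ℕ}

/-- The elementary intervals contained in the interval from the `i`th to the `k`th point. -/
def pointInterval (i k : Fin (n + 2)) : Finset (Fin (n + 1)) :=
  Finset.univ.filter fun m => i ≤ m.castSucc ∧ m.castSucc < k

lemma mem_pointInterval {i k : Fin (n + 2)} {m : Fin (n + 1)} :
    m ∈ pointInterval i k ↔ i ≤ m.castSucc ∧ m.castSucc < k := by
  simp [pointInterval]

lemma pointInterval_subset {i j k : Fin (n + 2)} (h : j ≤ k) :
    pointInterval i j ⊆ pointInterval i k := fun m hm => by
  rw [mem_pointInterval] at hm ⊢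
  exact ⟨hm.1, hm.2.trans_le h⟩

lemma pointInterval_self (i : Fin (n + 2)) : pointInterval i i = ∅ := by
  ext m
  simp [mem_pointInterval]

lemma pointInterval_succ {i : Fin (n + 2)} {m : Fin (n + 1)} (h : i ≤ m.castSucc) :
    pointInterval i m.succ = insert m (pointInterval i m.castSucc) := by
  ext l
  simp only [mem_pointInterval, Finset.mem_insert, Fin.le_def, Fin.lt_def, Fin.ext_iff,
    Fin.val_castSucc, Fin.val_succ] at h ⊢
  omega

lemma notMem_pointInterval (i : Fin (n + 2)) (m : Fin (n + 1)) :
    m ∉ pointInterval i m.castSucc := by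
  simp [mem_pointInterval]

lemma pointInterval_nonempty {i k : Fin (n + 2)} (h : i < k) : (pointInterval i k).Nonempty :=
  ⟨i.castPred (h.trans_le (Fin.le_last k)).ne, by simp [mem_pointInterval, h]⟩

lemma sum_pointInterval_sub (T : Fin (n + 2) → ℝ) {i k : Fin (n + 2)} (h : i ≤ k) :
    ∑ m ∈ pointInterval i k, (T m.succ - T m.castSucc) = T k - T i := by
  induction k using Fin.induction with
  | zero =>
    obtain rfl : i = 0 := le_antisymm h (Fin.zero_le i)
    simp [pointInterval_self]
  | succ m ih =>
    rcases h.eq_or_lt with rfl | hlt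
    · simp [pointInterval_self]
    · have hle : i ≤ m.castSucc := Fin.le_castSucc_iff.2 hlt
      rw [pointInterval_succ hle, Finset.sum_insert (notMem_pointInterval i m), ih hle]
      ring

lemma strictMono_ext01 {t : Fin n → ℝ} (ht : t ∈ openSimplex n) : StrictMono (ext01 t) := by
  obtain ⟨hmono, hpos, hlt⟩ := ht
  have hsnoc : ∀ m : Fin (n + 1), 0 < (Fin.snoc t 1 : Fin (n + 1) → ℝ) m := by
    intro m
    induction m using Fin.lastCases with
    | last => simp
    | cast m => simpa using hpos m
  rw [Fin.strictMono_iff_lt_succ]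
  intro m
  induction m using Fin.cases with
  | zero => simpa [ext01] using hsnoc 0
  | succ m =>
    rw [ext01, Fin.castSucc_succ, Fin.cons_succ, Fin.cons_succ, Fin.snoc_castSucc]
    rcases Fin.eq_castSucc_or_eq_last m.succ with ⟨l, hl⟩ | hl
    · rw [hl, Fin.snoc_castSucc]
      refine hmono m l ?_
      rw [← Fin.castSucc_lt_castSucc_iff, ← hl]
      exact Fin.castSucc_lt_succ
    · rw [hl, Fin.snoc_last]
      exact hlt m

lemma exists_ext01_eq {T : Fin (n + 2) → ℝ} (hT : StrictMono T) (h0 : T 0 = 0)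
    (h1 : T (Fin.last (n + 1)) = 1) : ∃ t ∈ openSimplex n, ext01 t = T := by
  refine ⟨fun i => T i.castSucc.succ, ⟨fun i j h => hT (by simpa using h), fun i => ?_, fun i => ?_⟩,
    ?_⟩
  · rw [← h0]
    exact hT (Fin.succ_pos _)
  · rw [← h1]
    refine hT ?_
    rw [← Fin.succ_last, Fin.succ_lt_succ_iff]
    exact Fin.castSucc_lt_last i
  · funext k
    induction k using Fin.cases with
    | zero => simp [ext01, h0]
    | succ k =>
      induction k using Fin.lastCases with
      | last => simp [ext01, h1]
      | cast k => simp [ext01]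

/-- The lengths of the elementary intervals of a configuration. -/
noncomputable def gapScale (t : Fin n → ℝ) (m : Fin (n + 1)) : ℝ≥0∞ :=
  ENNReal.ofReal (ext01 t m.succ - ext01 t m.castSucc)

lemma gapScale_ne {t : Fin n → ℝ} (ht : t ∈ openSimplex n) (m : Fin (n + 1)) :
    gapScale t m ≠ 0 ∧ gapScale t m ≠ ∞ := by
  refine ⟨(ENNReal.ofReal_pos.2 (sub_pos.2 (strictMono_ext01 ht ?_))).ne', ENNReal.ofReal_ne_top⟩
  exact Fin.castSucc_lt_succ

lemma sum_gapScale {t : Fin n → ℝ} (ht : t ∈ openSimplex n) {i k : Fin (n + 2)} (h : i ≤ k) :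
    ∑ m ∈ pointInterval i k, gapScale t m = ENNReal.ofReal (ext01 t k - ext01 t i) := by
  rw [← sum_pointInterval_sub _ h, ENNReal.ofReal_sum_of_nonneg]
  · rfl
  · exact fun m _ => sub_nonneg.2 ((strictMono_ext01 ht).monotone Fin.castSucc_lt_succ.le)

/-- The point of the product of `[0,1]^{T_n}` and `[0,∞]^{Q_n}` determined by the ratios of the
lengths of the elementary intervals. -/
noncomputable def ofRatios (ρ : Fin (n + 1) → Fin (n + 1) → ℝ≥0∞) :
    (TriIdx n → ℝ) × (QuadIdx n → ℝ≥0∞) :=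
  (fun q => (∑ m ∈ pointInterval q.1.1 q.1.2.1,
      share ρ (pointInterval q.1.1 q.1.2.2) m).toReal,
   fun q => ∑ m ∈ pointInterval q.1.1 q.1.2.1,
      share ρ (pointInterval q.1.2.2.1 q.1.2.2.2) m)

lemma ofRatios_gapScale {t : Fin n → ℝ} (ht : t ∈ openSimplex n) :
    ofRatios (ratioMatrix (gapScale t)) = deltaMap n t := by
  have hmono := (strictMono_ext01 ht).monotone
  refine Prod.ext (funext fun q => ?_) (funext fun q => ?_)
  · have h₁ := q.2.1.le
    have h₂ := (q.2.1.trans q.2.2).le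
    simp only [ofRatios, deltaMap, alphaMap]
    rw [sum_share_ratioMatrix (gapScale_ne ht), sum_gapScale ht h₁, sum_gapScale ht h₂,
      ENNReal.toReal_div, ENNReal.toReal_ofReal (sub_nonneg.2 (hmono h₁)),
      ENNReal.toReal_ofReal (sub_nonneg.2 (hmono h₂))]
  · simp only [ofRatios, deltaMap]
    rw [sum_share_ratioMatrix (gapScale_ne ht), sum_gapScale ht q.2.1.le,
      sum_gapScale ht q.2.2.2.le]

lemma sum_share_ne_top {ρ : Fin (n + 1) → Fin (n + 1) → ℝ≥0∞} (hρ : ρ ∈ ratioSpace _)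
    {i j k : Fin (n + 2)} (h : j ≤ k) :
    ∑ m ∈ pointInterval i j, share ρ (pointInterval i k) m ≠ ∞ :=
  ENNReal.sum_ne_top.2 fun _ hm => share_ne_top hρ (pointInterval_subset h hm)

lemma continuousOn_ofRatios :
    ContinuousOn (ofRatios (n := n)) (ratioSpace (Fin (n + 1))) := by
  refine ContinuousOn.prodMk (continuousOn_pi.2 fun q => ?_)
    (Continuous.continuousOn (continuous_pi fun q =>
      continuous_finsetSum _ fun m _ => continuous_share _ m))
  refine ENNReal.continuousOn_toReal.comp (Continuous.continuousOn
    (continuous_finsetSum _ fun m _ => continuous_share _ m)) fun ρ hρ => ?_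
  exact sum_share_ne_top hρ q.2.2.le

lemma exists_ratioMatrix_gapScale_eq {ρ : Fin (n + 1) → Fin (n + 1) → ℝ≥0∞}
    (hρ : ρ ∈ finiteRatios (Fin (n + 1))) :
    ∃ t ∈ openSimplex n, ratioMatrix (gapScale t) = ρ := by
  obtain ⟨b, hb, rfl⟩ := hρ
  have hpos : ∀ m, 0 < (b m).toReal := fun m => ENNReal.toReal_pos (hb m).1 (hb m).2
  have htot : 0 < ∑ m, (b m).toReal := Finset.sum_pos (fun m _ => hpos m) Finset.univ_nonempty
  let T : Fin (n + 2) → ℝ := fun k =>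
    (∑ m ∈ pointInterval 0 k, (b m).toReal) / ∑ m, (b m).toReal
  have hstep : ∀ m : Fin (n + 1), T m.succ - T m.castSucc = (b m).toReal / ∑ m, (b m).toReal := by
    intro m
    simp only [T]
    rw [pointInterval_succ (Fin.zero_le _), Finset.sum_insert (notMem_pointInterval 0 m)]
    ring
  have hmono : StrictMono T := Fin.strictMono_iff_lt_succ.2 fun m =>
    sub_pos.1 (by rw [hstep]; exact div_pos (hpos m) htot)
  obtain ⟨t, ht, hT⟩ := exists_ext01_eq hmono (by simp [T, pointInterval_self]) (by
    have huniv : pointInterval 0 (Fin.last (n + 1)) = Finset.univ := by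
      ext m
      simp [mem_pointInterval, Fin.castSucc_lt_last]
    simp only [T, huniv]
    exact div_self htot.ne')
  refine ⟨t, ht, ?_⟩
  have hscale : ∀ m, gapScale t m = (ENNReal.ofReal (∑ m, (b m).toReal))⁻¹ * b m := by
    intro m
    rw [gapScale, hT, hstep, ENNReal.ofReal_div_of_pos htot, ENNReal.ofReal_toReal (hb m).2,
      div_eq_mul_inv, mul_comm]
  funext i j
  rw [ratioMatrix, hscale, hscale, ENNReal.mul_div_mul_left _ _ (by simp) (by simp [htot])]
  rfl

lemma ofRatios_mem {ρ : Fin (n + 1) → Fin (n + 1) → ℝ≥0∞} (hρ : ρ ∈ ratioSpace (Fin (n + 1))) :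
    ofRatios ρ ∈ Perm n := by
  refine Set.MapsTo.closure_of_continuousOn (fun σ hσ => ?_) continuousOn_ofRatios hρ
  obtain ⟨t, ht, rfl⟩ := exists_ratioMatrix_gapScale_eq hσ
  exact ⟨t, ht, (ofRatios_gapScale ht).symm⟩

/-- The ratio of the lengths of two elementary intervals, the first one lying to the left. -/
noncomputable def ratioLT (p : (TriIdx n → ℝ) × (QuadIdx n → ℝ≥0∞)) (a b : Fin (n + 1))
    (h : a < b) : ℝ≥0∞ :=
  if h' : a.succ < b.castSucc then
    p.2 ⟨(a.castSucc, a.succ, b.castSucc, b.succ),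
      Fin.castSucc_lt_succ, h', Fin.castSucc_lt_succ⟩
  else
    ENNReal.ofReal (p.1 ⟨(a.castSucc, a.succ, b.succ),
      Fin.castSucc_lt_succ, Fin.succ_lt_succ_iff.2 h⟩) /
    ENNReal.ofReal (1 - p.1 ⟨(a.castSucc, a.succ, b.succ),
      Fin.castSucc_lt_succ, Fin.succ_lt_succ_iff.2 h⟩)

/-- The ratios of the lengths of the elementary intervals. -/
noncomputable def toRatios (p : (TriIdx n → ℝ) × (QuadIdx n → ℝ≥0∞)) (a b : Fin (n + 1)) :
    ℝ≥0∞ :=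
  if h : a < b then ratioLT p a b h else if h : b < a then (ratioLT p b a h)⁻¹ else 1

lemma continuous_ratioLT {a b : Fin (n + 1)} (h : a < b) :
    Continuous fun p : (TriIdx n → ℝ) × (QuadIdx n → ℝ≥0∞) => ratioLT p a b h := by
  unfold ratioLT
  split_ifs with h'
  · fun_prop
  · have hdiv : Continuous fun s : ℝ => ENNReal.ofReal s / ENNReal.ofReal (1 - s) := by
      refine continuous_iff_continuousAt.2 fun s => ENNReal.Tendsto.div
        (ENNReal.continuous_ofReal.tendsto s) ?_
        ((ENNReal.continuous_ofReal.comp (by fun_prop : Continuous fun s : ℝ => 1 - s)).tendsto s)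
        (Or.inr ENNReal.ofReal_ne_top)
      by_contra! hcon
      simp only [ENNReal.ofReal_eq_zero] at hcon
      linarith [hcon.1, hcon.2]
    exact hdiv.comp (by fun_prop)

lemma continuous_toRatios : Continuous (toRatios (n := n)) := by
  refine continuous_pi fun a => continuous_pi fun b => ?_
  unfold toRatios
  split_ifs with h h'
  · exact continuous_ratioLT h
  · exact (continuous_ratioLT h').inv
  · exact continuous_const

lemma toRatios_deltaMap {t : Fin n → ℝ} (ht : t ∈ openSimplex n) :
    toRatios (deltaMap n t) = ratioMatrix (gapScale t) := by
  have hmono := strictMono_ext01 ht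
  have hLT : ∀ a b (h : a < b), ratioLT (deltaMap n t) a b h = gapScale t a / gapScale t b := by
    intro a b h
    unfold ratioLT
    split_ifs with h'
    · rfl
    · have hab : a.succ = b.castSucc := le_antisymm
        (by simp only [Fin.le_def, Fin.val_succ, Fin.val_castSucc]; exact Nat.succ_le_of_lt h)
        (not_lt.1 h')
      have h₁ : ext01 t a.castSucc < ext01 t a.succ := hmono Fin.castSucc_lt_succ
      have h₂ : ext01 t a.succ < ext01 t b.succ := hmono (Fin.succ_lt_succ_iff.2 h)
      have h₃ : 0 < ext01 t b.succ - ext01 t a.castSucc := by linarith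
      simp only [deltaMap, alphaMap]
      rw [one_sub_div h₃.ne', ENNReal.ofReal_div_of_pos h₃, ENNReal.ofReal_div_of_pos h₃,
        div_eq_mul_inv _ (ENNReal.ofReal (ext01 t b.succ - _)),
        div_eq_mul_inv _ (ENNReal.ofReal (ext01 t b.succ - _)),
        ENNReal.mul_div_mul_right _ _ (by simp) (by simpa using h₃), sub_sub_sub_cancel_right,
        gapScale, gapScale, hab]
  funext a b
  unfold toRatios ratioMatrix
  split_ifs with h h'
  · exact hLT a b h
  · rw [hLT b a h', ENNReal.inv_div (Or.inl (gapScale_ne ht a).2) (Or.inl (gapScale_ne ht a).1)]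
  · obtain rfl : a = b := le_antisymm (not_lt.1 h') (not_lt.1 h)
    rw [ENNReal.div_self (gapScale_ne ht a).1 (gapScale_ne ht a).2]

lemma toRatios_mem {p : (TriIdx n → ℝ) × (QuadIdx n → ℝ≥0∞)} (hp : p ∈ Perm n) :
    toRatios p ∈ ratioSpace (Fin (n + 1)) := by
  refine map_mem_closure continuous_toRatios hp ?_
  rintro _ ⟨t, ht, rfl⟩
  exact ⟨_, gapScale_ne ht, (toRatios_deltaMap ht).symm⟩

lemma ofRatios_toRatios {p : (TriIdx n → ℝ) × (QuadIdx n → ℝ≥0∞)} (hp : p ∈ Perm n) :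
    ofRatios (toRatios p) = p := by
  refine Set.EqOn.of_subset_closure (s := deltaMap n '' openSimplex n) (t := Perm n)
    (f := fun p => ofRatios (toRatios p)) (g := id) ?_
    (continuousOn_ofRatios.comp continuous_toRatios.continuousOn fun p => toRatios_mem)
    continuousOn_id subset_closure subset_rfl hp
  rintro _ ⟨t, ht, rfl⟩
  simp only [toRatios_deltaMap ht, ofRatios_gapScale ht, id]

variable (n) in
/-- The family of all intervals between two points. -/
def pointIntervals : Set (Finset (Fin (n + 1))) :=
  {I | ∃ i k : Fin (n + 2), i < k ∧ pointInterval i k = I}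

lemma mem_shareFiber_pointIntervals_iff {ρ₀ ρ : Fin (n + 1) → Fin (n + 1) → ℝ≥0∞}
    (hρ₀ : ρ₀ ∈ ratioSpace (Fin (n + 1))) (hρ : ρ ∈ ratioSpace (Fin (n + 1))) :
    ρ ∈ shareFiber (pointIntervals n) ρ₀ ↔ (ofRatios ρ).1 = (ofRatios ρ₀).1 := by
  constructor
  · rintro ⟨-, h⟩
    funext q
    refine congrArg ENNReal.toReal (Finset.sum_congr rfl fun m hm => ?_)
    exact h _ ⟨_, _, q.2.1.trans q.2.2, rfl⟩ m (pointInterval_subset q.2.2.le hm)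
  · refine fun h => ⟨hρ, ?_⟩
    rintro _ ⟨i, k, hik, rfl⟩ m hm
    have hsum : ∀ j, i ≤ j → j ≤ k → ∑ m ∈ pointInterval i j, share ρ (pointInterval i k) m =
        ∑ m ∈ pointInterval i j, share ρ₀ (pointInterval i k) m := by
      intro j hij hjk
      rcases hij.eq_or_lt with rfl | hij
      · simp [pointInterval_self]
      rcases hjk.eq_or_lt with rfl | hjk
      · rw [sum_share_self hρ (pointInterval_nonempty hij),
          sum_share_self hρ₀ (pointInterval_nonempty hij)]
      · exact (ENNReal.toReal_eq_toReal_iff' (sum_share_ne_top hρ hjk.le)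
          (sum_share_ne_top hρ₀ hjk.le)).1 (congrFun h ⟨(i, j, k), hij, hjk⟩)
    rw [mem_pointInterval] at hm
    have hsucc := hsum m.succ (hm.1.trans Fin.castSucc_lt_succ.le)
      (Fin.castSucc_lt_iff_succ_le.1 hm.2)
    rw [pointInterval_succ hm.1, Finset.sum_insert (notMem_pointInterval i m),
      Finset.sum_insert (notMem_pointInterval i m), hsum _ hm.1 hm.2.le] at hsucc
    exact (ENNReal.add_left_inj (sum_share_ne_top hρ₀ hm.2.le)).1 hsucc

lemma contractibleSpace_fiber {p₀ : (TriIdx n → ℝ) × (QuadIdx n → ℝ≥0∞)} (hp₀ : p₀ ∈ Perm n) :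
    ContractibleSpace ↥(Prod.fst ⁻¹' {p₀.1} ∩ Perm n) := by
  have hρ₀ := toRatios_mem hp₀
  have hfst : (ofRatios (toRatios p₀)).1 = p₀.1 := by rw [ofRatios_toRatios hp₀]
  have hto : ∀ p ∈ Prod.fst ⁻¹' {p₀.1} ∩ Perm n,
      toRatios p ∈ shareFiber (pointIntervals n) (toRatios p₀) := fun p hp =>
    (mem_shareFiber_pointIntervals_iff hρ₀ (toRatios_mem hp.2)).2
      (by rw [hfst, ofRatios_toRatios hp.2]; exact hp.1)
  have hfrom : ∀ ρ ∈ shareFiber (pointIntervals n) (toRatios p₀),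
      ofRatios ρ ∈ Prod.fst ⁻¹' {p₀.1} ∩ Perm n := fun ρ hρ =>
    ⟨((mem_shareFiber_pointIntervals_iff hρ₀ hρ.1).1 hρ).trans hfst, ofRatios_mem hρ.1⟩
  have := contractibleSpace_shareFiber (pointIntervals n) hρ₀
  have hcont : Continuous fun ρ : shareFiber (pointIntervals n) (toRatios p₀) => ofRatios ρ.1 :=
    continuousOn_ofRatios.comp_continuous continuous_subtype_val fun ρ => ρ.2.1
  let f : C(↥(Prod.fst ⁻¹' {p₀.1} ∩ Perm n), shareFiber (pointIntervals n) (toRatios p₀)) :=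
    ⟨fun p => ⟨_, hto p.1 p.2⟩, (continuous_toRatios.comp continuous_subtype_val).subtype_mk _⟩
  let g : C(shareFiber (pointIntervals n) (toRatios p₀), ↥(Prod.fst ⁻¹' {p₀.1} ∩ Perm n)) :=
    ⟨fun ρ => ⟨_, hfrom ρ.1 ρ.2⟩, hcont.subtype_mk _⟩
  have hgf : g.comp f = ContinuousMap.id _ :=
    ContinuousMap.ext fun p => Subtype.ext (ofRatios_toRatios p.2.2)
  exact contractibleSpace_of_comp_homotopic_id f g (hgf ▸ ContinuousMap.Homotopic.refl _)

lemma isCompact_Perm : IsCompact (Perm n) := by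
  have hK : IsCompact ((Set.univ.pi fun _ : TriIdx n => Set.Icc (0 : ℝ) 1) ×ˢ
      (Set.univ : Set (QuadIdx n → ℝ≥0∞))) :=
    (isCompact_univ_pi fun _ => isCompact_Icc).prod isCompact_univ
  refine hK.of_isClosed_subset isClosed_closure (closure_minimal ?_ hK.isClosed)
  rintro _ ⟨t, ht, rfl⟩
  refine ⟨fun q _ => ?_, Set.mem_univ _⟩
  have h₁ := strictMono_ext01 ht q.2.1
  have h₂ := strictMono_ext01 ht q.2.2
  exact ⟨div_nonneg (by linarith) (by linarith), div_le_one_of_le₀ (by linarith) (by linarith)⟩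

lemma image_fst_Perm : Prod.fst '' Perm n = Assoc n := by
  rw [Perm, image_closure_of_isCompact isCompact_Perm continuous_fst.continuousOn, Set.image_image]
  rfl

end Configurations

/-- **Theorem 8.4** (for the projection `π\'\'_n : Perm_n → Assoc_n`).  The projection
`p` onto the first factor satisfies `p ∘ δ_n = α_n`, maps the permutohedron `Perm_n` onto
the associahedron `Assoc_n`, and the preimage in `Perm_n` of every point of `Assoc_n` is
contractible. -/
theorem permutohedron_projects_to_associahedron (n : ℕ) (hn : 1 ≤ n) :
    (∀ t ∈ openSimplex n, (deltaMap n t).1 = alphaMap n t) ∧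
    Prod.fst '' Perm n = Assoc n ∧
    ∀ x ∈ Assoc n, ContractibleSpace ↥(Prod.fst ⁻¹' {x} ∩ Perm n) := by
  refine ⟨fun t _ => rfl, image_fst_Perm, fun x hx => ?_⟩
  rw [← image_fst_Perm] at hx
  obtain ⟨p, hp, rfl⟩ := hx
  exact contractibleSpace_fiber hp
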